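/- arXiv:2111.04166 — 2 statements merged into one kernel-verified Lean document; each statement's English description precedes it below -/
import Mathlib

section
/- Let g(x), h(x) ∈ F_q[x] be coprime with g monic of degree 3 and deg h ≤ 2. Then for every integer n > 1, |𝓘(g, h, n, q)| = (1/n) ∑_{d ∣ n, 3 ∤ d} μ(d) |Ū(n/d, q)|, where μ is the Möbius function. -/
open Polynomial

/-- The transform `f_R` of a nonzero polynomial `f` by the rational expression `R = g/h`. -/
noncomputable def ratTransform {K : Type*} [Field K] (g h f : K[X]) : K[X] :=
  ∑ i ∈ Finset.range (f.natDegree + 1), C (f.coeff i) * g ^ i * h ^ (f.natDegree - i)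

/-- `𝓘(g,h,n,q)`: the set of monic irreducible polynomials `f` of degree `n` over the field
such that `f_R` is irreducible. -/
noncomputable def IrredSet {K : Type*} [Field K] (g h : K[X]) (n : ℕ) : Set K[X] :=
  {f | f.Monic ∧ Irreducible f ∧ f.natDegree = n ∧ Irreducible (ratTransform g h f)}

/-- `Ū(m,q)`: the set of `β` in the extension `E` (a field with `q^m` elements)
such that `g(x) − β h(x)` is irreducible over `E`. -/
noncomputable def Ubar {F : Type*} [Field F] (g h : F[X]) (E : Type*) [Field E]
    [Algebra F E] : Set E :=
  {β | Irreducible (g.map (algebraMap F E) - C β * h.map (algebraMap F E))}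

/-!
A root `α` of `g - β h` satisfies `β = g(α) / h(α) ∈ F(α)`, so if `f` is the minimal polynomial of
`β`, comparing degrees along `F ⊆ F(β) ⊆ F(α)` shows that `f_R` is irreducible over `F` if and only
if `g - β h` is irreducible over `F(β)`. Over finite fields, the latter stays irreducible over a
larger field `E` exactly when `deg g` is coprime to `[E : F(β)]`. Sorting `β ∈ E` by its minimal
polynomial therefore gives `|Ū(m)| = ∑ χ(d) (m / d) |𝓘(m / d)|`, where `d` runs over the divisors
of `m` and `χ` is the principal character modulo `deg g`. As `χ` is completely multiplicative, its
Dirichlet inverse is `χ μ`, which inverts this relation.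
-/

open IntermediateField Module

section IrreducibleRoot

variable {K L : Type*} [Field K] [Field L] [Algebra K L]

lemma irreducible_iff_natDegree_minpoly_eq {p : K[X]} (hp : p ≠ 0) {x : L} (hx : aeval x p = 0) :
    Irreducible p ↔ (minpoly K x).natDegree = p.natDegree := by
  have hint : IsIntegral K x := IsAlgebraic.isIntegral ⟨p, hp, hx⟩
  have hdvd : minpoly K x ∣ p := minpoly.dvd K x hx
  refine ⟨fun hirr => ?_, fun hdeg => ?_⟩
  · exact natDegree_eq_of_degree_eq <| degree_eq_degree_of_associated <|
      (minpoly.irreducible hint).associated_of_dvd hirr hdvd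
  · exact (associated_of_dvd_of_natDegree_le hdvd hp hdeg.ge).irreducible (minpoly.irreducible hint)

end IrreducibleRoot

section FiniteField

variable {K : Type*} [Field K] [Finite K]

lemma natDegree_minpoly_eq_minimalPeriod_pow_card {L : Type*} [Field L] [Algebra K L] {x : L}
    (hx : IsIntegral K x) :
    (minpoly K x).natDegree = Function.minimalPeriod (· ^ Nat.card K) x := by
  refine Nat.dvd_right_iff_eq.1 fun j => ?_
  rw [(minpoly.irreducible hx).natDegree_dvd_iff_dvd_X_pow_card_pow_sub_X, minpoly.dvd_iff,
    ← Function.isPeriodicPt_iff_minimalPeriod_dvd, Function.IsPeriodicPt, Function.IsFixedPt,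
    pow_iterate]
  simp [sub_eq_zero]

variable {E : Type*} [Field E] [Finite E] [Algebra K E]

-- The Frobenius map of `E` is the `[E : K]`-th iterate of the Frobenius map of `K`.
lemma natDegree_minpoly_eq_div_gcd_finrank {L : Type*} [Field L] [Algebra K L] [Algebra E L]
    [IsScalarTower K E L] {x : L} (hx : IsIntegral K x) :
    (minpoly E x).natDegree =
      (minpoly K x).natDegree / (minpoly K x).natDegree.gcd (finrank K E) := by
  rw [natDegree_minpoly_eq_minimalPeriod_pow_card hx,
    natDegree_minpoly_eq_minimalPeriod_pow_card hx.tower_top,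
    ← Function.minimalPeriod_iterate_eq_div_gcd finrank_pos.ne', pow_iterate,
    natCard_eq_pow_finrank (K := K) (V := E)]

lemma irreducible_map_iff_coprime_finrank {p : K[X]} :
    Irreducible (p.map (algebraMap K E)) ↔
      Irreducible p ∧ p.natDegree.Coprime (finrank K E) := by
  by_cases hp : p.natDegree = 0
  · refine iff_of_false (fun h => ?_) (fun h => h.1.natDegree_pos.ne' hp)
    exact h.natDegree_pos.ne' (by rw [natDegree_map, hp])
  have hp0 : p ≠ 0 := by rintro rfl; exact hp natDegree_zero
  obtain ⟨α, hα⟩ : ∃ α : AlgebraicClosure E, aeval α p = 0 :=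
    IsAlgClosed.exists_aeval_eq_zero _ p
      (natDegree_pos_iff_degree_pos.1 (Nat.pos_of_ne_zero hp)).ne'
  have hint : IsIntegral K α := IsAlgebraic.isIntegral ⟨p, hp0, hα⟩
  have hle : (minpoly K α).natDegree ≤ p.natDegree :=
    natDegree_le_of_dvd (minpoly.dvd K α hα) hp0
  rw [irreducible_iff_natDegree_minpoly_eq (map_ne_zero hp0)
      (show aeval α (p.map (algebraMap K E)) = 0 by rwa [aeval_map_algebraMap]),
    irreducible_iff_natDegree_minpoly_eq hp0 hα, natDegree_map,
    natDegree_minpoly_eq_div_gcd_finrank hint]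
  constructor
  · intro h
    have hdeg : (minpoly K α).natDegree = p.natDegree := hle.antisymm (h ▸ Nat.div_le_self _ _)
    rw [hdeg, Nat.div_eq_self] at h
    exact ⟨hdeg, h.resolve_left hp⟩
  · rintro ⟨hdeg, hcop⟩
    rw [hdeg, hcop.gcd_eq_one, Nat.div_one]

lemma ncard_setOf_minpoly_eq {f : K[X]} (hf : f.Monic) (hirr : Irreducible f)
    (hdvd : f.natDegree ∣ finrank K E) :
    {β : E | minpoly K β = f}.ncard = f.natDegree := by
  have hroots : {β : E | minpoly K β = f} = f.rootSet E := by
    ext β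
    rw [mem_rootSet_of_ne hf.ne_zero]
    refine ⟨?_, fun h => (minpoly.eq_of_irreducible_of_monic hirr h hf).symm⟩
    rintro rfl
    exact minpoly.aeval K β
  have hsplits : (f.map (algebraMap K E)).Splits := by
    refine (splits_X_pow_nat_card_sub_X (K := E)).of_dvd
      (FiniteField.X_pow_card_sub_X_ne_zero _ Finite.one_lt_card) ?_
    rw [natCard_eq_pow_finrank (K := K) (V := E)]
    simpa using Polynomial.map_dvd (algebraMap K E)
      (hirr.natDegree_dvd_iff_dvd_X_pow_card_pow_sub_X.1 hdvd)
  rw [hroots, Set.ncard_eq_toFinset_card', Set.toFinset_card,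
    card_rootSet_eq_natDegree (PerfectField.separable_of_irreducible hirr) hsplits]

lemma ncard_setOf_minpoly_mem {S : Set K[X]} {k : ℕ}
    (hS : ∀ f ∈ S, f.Monic ∧ Irreducible f ∧ f.natDegree = k) (hk : k ∣ finrank K E) :
    {β : E | minpoly K β ∈ S}.ncard = k * S.ncard := by
  classical
  have := Fintype.ofFinite E
  have hfiber : ∀ f ∈ S, {β : E | minpoly K β = f}.ncard = k := fun f hf => by
    obtain ⟨hmonic, hirr, rfl⟩ := hS f hf
    exact ncard_setOf_minpoly_eq hmonic hirr hk
  set T : Finset E := {β | minpoly K β ∈ S} with hT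
  have himage : S = (T.image (minpoly K) : Finset K[X]) := by
    refine Set.Subset.antisymm (fun f hf => ?_) (fun f hf => ?_)
    · have hpos : {β : E | minpoly K β = f}.ncard ≠ 0 := by
        rw [hfiber f hf, ← (hS f hf).2.2]
        exact (hS f hf).2.1.natDegree_pos.ne'
      obtain ⟨β, rfl⟩ := Set.nonempty_of_ncard_ne_zero hpos
      simpa [hT] using ⟨β, hf, rfl⟩
    · obtain ⟨β, hβ, rfl⟩ := Finset.mem_image.1 hf
      simpa [hT] using hβ
  have hcard : T.card = (T.image (minpoly K)).card * k := by
    rw [Finset.card_eq_sum_card_image (minpoly K) T]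
    refine Finset.sum_const_nat fun f hf => ?_
    have hfS : f ∈ S := by rw [himage]; exact hf
    rw [← hfiber f hfS, ← Set.ncard_coe_finset]
    congr 1
    ext β
    simp only [hT, Finset.coe_filter, Finset.mem_filter, Finset.mem_univ, true_and,
      Set.mem_ofPred_eq, and_iff_right_iff_imp]
    rintro rfl
    exact hfS
  rw [himage, Set.ncard_coe_finset, mul_comm, ← hcard, ← Set.ncard_coe_finset, hT,
    Finset.coe_filter_univ, ← himage]

end FiniteField

lemma natDegree_minpoly_eq_finrank_mul {F K L : Type*} [Field F] [Field K] [Field L]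
    [Algebra F K] [Algebra K L] [Algebra F L] [IsScalarTower F K L]
    {α : L} (hαF : IsIntegral F α)
    (hK : (IsScalarTower.toAlgHom F K L).fieldRange ≤ F⟮α⟯) :
    (minpoly F α).natDegree = finrank F K * (minpoly K α).natDegree := by
  have hle : K⟮α⟯.toSubfield ≤ F⟮α⟯.toSubfield :=
    Subfield.closure_le.2 (Set.union_subset hK (subset_adjoin F {α}))
  have hadjoin : K⟮α⟯.restrictScalars F = F⟮α⟯ :=
    le_antisymm hle (adjoin_simple_le_iff.2 (mem_adjoin_simple_self K α))
  have hrank : finrank F K⟮α⟯ = finrank F F⟮α⟯ := by rw [← hadjoin]; rfl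
  rw [← adjoin.finrank hαF, ← adjoin.finrank hαF.tower_top, finrank_mul_finrank, hrank]

section RatTransform

variable {K : Type*} [Field K] {g h : K[X]}

lemma natDegree_sub_C_mul (hdeg : h.natDegree < g.natDegree) (β : K) :
    (g - C β * h).natDegree = g.natDegree :=
  natDegree_sub_eq_left_of_natDegree_lt ((natDegree_C_mul_le β h).trans_lt hdeg)

lemma natDegree_ratTransform (hdeg : h.natDegree < g.natDegree) (f : K[X]) :
    (ratTransform g h f).natDegree = g.natDegree * f.natDegree := by
  rcases eq_or_ne f 0 with rfl | hf
  · simp [ratTransform]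
  have hg : g ≠ 0 := by rintro rfl; simp at hdeg
  have hlead : (C f.leadingCoeff * g ^ f.natDegree).natDegree = g.natDegree * f.natDegree := by
    rw [natDegree_C_mul (leadingCoeff_ne_zero.2 hf), natDegree_pow, mul_comm]
  have hlead0 : C f.leadingCoeff * g ^ f.natDegree ≠ 0 :=
    mul_ne_zero (C_ne_zero.2 (leadingCoeff_ne_zero.2 hf)) (pow_ne_zero _ hg)
  have hlower : (∑ i ∈ Finset.range f.natDegree,
      C (f.coeff i) * g ^ i * h ^ (f.natDegree - i)).degree <
        (C f.leadingCoeff * g ^ f.natDegree).degree := by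
    rw [degree_eq_natDegree hlead0, hlead]
    refine (degree_sum_le _ _).trans_lt ?_
    refine (Finset.sup_lt_iff (WithBot.bot_lt_coe _)).2 fun i hi => ?_
    refine degree_le_natDegree.trans_lt (Nat.cast_lt.2 ?_)
    calc (C (f.coeff i) * g ^ i * h ^ (f.natDegree - i)).natDegree
        ≤ i * g.natDegree + (f.natDegree - i) * h.natDegree :=
          natDegree_mul_le_of_le
            ((natDegree_C_mul_le _ _).trans natDegree_pow_le) natDegree_pow_le
      _ < i * g.natDegree + (f.natDegree - i) * g.natDegree := by
          have := Nat.sub_pos_of_lt (Finset.mem_range.1 hi)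
          gcongr
      _ = g.natDegree * f.natDegree := by
          rw [← add_mul, Nat.add_sub_cancel' (Finset.mem_range.1 hi).le, mul_comm]
  rw [ratTransform, Finset.sum_range_succ, Nat.sub_self, pow_zero, mul_one, add_comm,
    coeff_natDegree, natDegree_add_eq_left_of_degree_lt hlower, hlead]

variable {L : Type*} [Field L] [Algebra K L]

lemma aeval_ratTransform {α β : L} (hβ : aeval α g = β * aeval α h) (f : K[X]) :
    aeval α (ratTransform g h f) = aeval α h ^ f.natDegree * aeval β f := by
  rw [ratTransform, map_sum, aeval_eq_sum_range (p := f), Finset.mul_sum]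
  refine Finset.sum_congr rfl fun i hi => ?_
  have hpow : aeval α h ^ f.natDegree = aeval α h ^ (f.natDegree - i) * aeval α h ^ i := by
    rw [← pow_add, Nat.sub_add_cancel (Finset.mem_range_succ_iff.1 hi)]
  simp only [map_mul, map_pow, aeval_C, hβ, Algebra.smul_def, hpow]
  ring

lemma mem_adjoin_simple_of_aeval_eq_mul_aeval (hcop : IsCoprime g h) {α β : L}
    (hβ : aeval α g = β * aeval α h) : β ∈ K⟮α⟯ := by
  have hh : aeval α h ≠ 0 := fun h0 => by
    obtain ⟨u, v, huv⟩ := hcop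
    simpa [hβ, h0] using congrArg (aeval α) huv
  have hmem (p : K[X]) : aeval α p ∈ K⟮α⟯ :=
    algebra_adjoin_le_adjoin K {α} (aeval_mem_adjoin_singleton K α)
  rw [eq_div_of_mul_eq hh hβ.symm]
  exact div_mem (hmem g) (hmem h)

end RatTransform

section Ubar

variable {F : Type*} [Field F] {g h : F[X]}

lemma irreducible_ratTransform_minpoly_iff {K : Type*} [Field K] [Algebra F K]
    (hdeg : h.natDegree < g.natDegree) (hcop : IsCoprime g h) {β : K} (hβ : IsIntegral F β)
    (hgen : F⟮β⟯ = ⊤) :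
    Irreducible (ratTransform g h (minpoly F β)) ↔ β ∈ Ubar g h K := by
  set p : K[X] := g.map (algebraMap F K) - C β * h.map (algebraMap F K) with hp
  have hpdeg : p.natDegree = g.natDegree := by
    rw [hp, natDegree_sub_C_mul (by simpa only [natDegree_map] using hdeg), natDegree_map]
  have hppos : 0 < p.natDegree := hpdeg ▸ Nat.zero_lt_of_lt hdeg
  obtain ⟨α, hα⟩ : ∃ α : AlgebraicClosure K, aeval α p = 0 :=
    IsAlgClosed.exists_aeval_eq_zero _ p (natDegree_pos_iff_degree_pos.1 hppos).ne'
  have hgh : aeval α g = algebraMap K _ β * aeval α h := by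
    simpa [hp, sub_eq_zero, aeval_map_algebraMap] using hα
  have hT : aeval α (ratTransform g h (minpoly F β)) = 0 := by
    rw [aeval_ratTransform hgh, aeval_algebraMap_apply, minpoly.aeval, map_zero, mul_zero]
  have hTdeg := natDegree_ratTransform hdeg (minpoly F β)
  have hTpos : 0 < (ratTransform g h (minpoly F β)).natDegree :=
    hTdeg ▸ Nat.mul_pos (Nat.zero_lt_of_lt hdeg) (minpoly.natDegree_pos hβ)
  have hTne := ne_zero_of_natDegree_gt hTpos
  have hrange : (IsScalarTower.toAlgHom F K (AlgebraicClosure K)).fieldRange ≤ F⟮α⟯ := by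
    rw [AlgHom.fieldRange_eq_map, ← hgen, adjoin_map, Set.image_singleton, adjoin_simple_le_iff]
    exact mem_adjoin_simple_of_aeval_eq_mul_aeval hcop hgh
  have hfinrank : finrank F K = (minpoly F β).natDegree := by
    rw [← adjoin.finrank hβ, hgen, finrank_top']
  change _ ↔ Irreducible p
  rw [irreducible_iff_natDegree_minpoly_eq hTne hT,
    irreducible_iff_natDegree_minpoly_eq (ne_zero_of_natDegree_gt hppos) hα, hTdeg, hpdeg,
    natDegree_minpoly_eq_finrank_mul (IsAlgebraic.isIntegral ⟨_, hTne, hT⟩) hrange, hfinrank,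
    mul_comm]
  exact Nat.mul_left_inj (minpoly.natDegree_pos hβ).ne'

variable {E : Type*} [Field E] [Finite E] [Algebra F E]

lemma mem_Ubar_iff (hdeg : h.natDegree < g.natDegree) (hcop : IsCoprime g h) {β : E} :
    β ∈ Ubar g h E ↔ Irreducible (ratTransform g h (minpoly F β)) ∧
      g.natDegree.Coprime (finrank F⟮β⟯ E) := by
  set γ := AdjoinSimple.gen F β
  have hmap : g.map (algebraMap F E) - C β * h.map (algebraMap F E) =
      (g.map (algebraMap F F⟮β⟯) - C γ * h.map (algebraMap F F⟮β⟯)).map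
        (algebraMap F⟮β⟯ E) := by
    simp [γ, Polynomial.map_map, ← IsScalarTower.algebraMap_eq]
  have hgen : F⟮γ⟯ = ⊤ :=
    adjoin_eq_top_of_algebra F _ (adjoin.powerBasis (.of_finite F β)).adjoin_gen_eq_top
  have hmin : minpoly F γ = minpoly F β := minpoly_gen F β
  rw [← hmin, irreducible_ratTransform_minpoly_iff hdeg hcop (.of_finite F γ) hgen]
  simp only [Ubar, Set.mem_ofPred_eq]
  rw [hmap, irreducible_map_iff_coprime_finrank,
    natDegree_sub_C_mul (by simpa only [natDegree_map] using hdeg), natDegree_map]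

lemma ncard_Ubar [Finite F] (hdeg : h.natDegree < g.natDegree) (hcop : IsCoprime g h) :
    (Ubar g h E).ncard = ∑ d ∈ (finrank F E).divisors with g.natDegree.Coprime d,
      finrank F E / d * (IrredSet g h (finrank F E / d)).ncard := by
  classical
  have := Fintype.ofFinite E
  have hfinrank (β : E) : (minpoly F β).natDegree * finrank F⟮β⟯ E = finrank F E := by
    rw [← adjoin.finrank (.of_finite F β), finrank_mul_finrank]
  have hmaps : ∀ β ∈ (Ubar g h E).toFinset, finrank F⟮β⟯ E ∈
      {d ∈ (finrank F E).divisors | g.natDegree.Coprime d} := fun β hβ => by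
    rw [Set.mem_toFinset, mem_Ubar_iff hdeg hcop] at hβ
    exact Finset.mem_filter.2
      ⟨Nat.mem_divisors.2 ⟨Dvd.intro_left _ (hfinrank β), finrank_pos.ne'⟩, hβ.2⟩
  rw [Set.ncard_eq_toFinset_card', Finset.card_eq_sum_card_fiberwise hmaps]
  refine Finset.sum_congr rfl fun d hd => ?_
  obtain ⟨hd, hcoprime⟩ := Finset.mem_filter.1 hd
  have hdvd : d ∣ finrank F E := Nat.dvd_of_mem_divisors hd
  have hdeg_iff (β : E) : finrank F⟮β⟯ E = d ↔ (minpoly F β).natDegree = finrank F E / d := by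
    have hpos : 0 < (minpoly F β).natDegree := minpoly.natDegree_pos (.of_finite F β)
    have hd0 : 0 < d := Nat.pos_of_dvd_of_pos hdvd finrank_pos
    rw [eq_comm (b := finrank F E / d), Nat.div_eq_iff_eq_mul_left hd0 hdvd, ← hfinrank β,
      Nat.mul_right_inj hpos.ne']
  rw [← ncard_setOf_minpoly_mem (E := E) (fun f hf => ⟨hf.1, hf.2.1, hf.2.2.1⟩)
    (Nat.div_dvd_of_dvd hdvd), ← Set.ncard_coe_finset]
  congr 1
  ext β
  simp only [Finset.coe_filter, Set.mem_toFinset, Set.mem_ofPred_eq, mem_Ubar_iff hdeg hcop,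
    IrredSet, ← hdeg_iff, minpoly.monic (.of_finite F β),
    minpoly.irreducible (.of_finite F β), true_and]
  rw [and_comm]
  refine and_congr_right fun hβ => ?_
  rw [hβ, and_iff_left hcoprime]

end Ubar

section MoebiusInversion

open ArithmeticFunction
open scoped LSeries.notation

lemma dirichletCharacter_mul_moebius_convolution {R : Type*} [CommRing R] {N : ℕ}
    (χ : DirichletCharacter R N) :
    (fun d : ℕ => χ d * (moebius d : R)) ⍟ (fun d : ℕ => χ d) = (1 : ArithmeticFunction R) := by
  have hmoebius : (fun d : ℕ => (moebius d : R)) ⍟ 1 = (1 : ArithmeticFunction R) := by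
    rw [LSeries.convolution_one_eq_convolution_zeta]
    simp_rw [← natCoe_apply, ← intCoe_apply, ArithmeticFunction.coe_mul, coe_moebius_mul_coe_zeta]
  have h := χ.mul_convolution_distrib (fun d => (moebius d : R)) 1
  rw [hmoebius, mul_one] at h
  refine h.trans (funext fun n => ?_)
  by_cases hn : n = 1 <;> simp [hn, one_apply_ne]

lemma sum_dirichletCharacter_mul_moebius_mul_eq {R : Type*} [CommRing R] {N : ℕ}
    (χ : DirichletCharacter R N) {f G : ℕ → R}
    (hG : ∀ m, 0 < m → G m = ∑ d ∈ m.divisors, χ d * f (m / d)) {n : ℕ} (hn : 0 < n) :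
    ∑ d ∈ n.divisors, χ d * moebius d * G (n / d) = f n := by
  set A : (ℕ → R) → ArithmeticFunction R := toArithmeticFunction
  set χμ : ℕ → R := fun d => χ d * moebius d
  have hAG : A G = A (χ ·) * A f := by
    ext m
    rcases Nat.eq_zero_or_pos m with rfl | hm
    · simp only [ArithmeticFunction.map_zero]
    calc A G m = G m := if_neg hm.ne'
      _ = ∑ p ∈ m.divisorsAntidiagonal, χ p.1 * f p.2 := by
          rw [hG m hm, Nat.sum_divisorsAntidiagonal (fun d e => χ d * f e)]
      _ = (A (χ ·) * A f) m := (congrFun (LSeries.convolution_def (χ ·) f) m).symm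
  have hinv : A χμ * A (χ ·) = 1 :=
    DFunLike.coe_injective (dirichletCharacter_mul_moebius_convolution χ)
  calc ∑ d ∈ n.divisors, χμ d * G (n / d)
      = (A χμ * A G) n := by
        rw [← Nat.sum_divisorsAntidiagonal (fun d e => χμ d * G e)]
        exact (congrFun (LSeries.convolution_def χμ G) n).symm
    _ = f n := by
        rw [hAG, ← mul_assoc, hinv, one_mul]
        exact if_neg hn.ne'

end MoebiusInversion

lemma dirichletCharacter_one_apply {R : Type*} [CommMonoidWithZero R] (N d : ℕ) :
    (1 : DirichletCharacter R N) d = if N.Coprime d then 1 else 0 := by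
  split_ifs with hd
  · exact MulChar.one_apply ((ZMod.isUnit_iff_coprime d N).2 hd.symm)
  · exact MulChar.map_nonunit _ (by rwa [ZMod.isUnit_iff_coprime, Nat.coprime_comm])

theorem stmt3_general {F : Type*} [Field F] [Finite F] {g h : F[X]}
    (hdeg : h.natDegree < g.natDegree) (hcop : IsCoprime g h)
    (E : ℕ → Type*) [∀ m, Field (E m)] [∀ m, Algebra F (E m)]
    (hE : ∀ m, 0 < m → finrank F (E m) = m) {n : ℕ} (hn : 0 < n) :
    ((IrredSet g h n).ncard : ℚ) =
      (1 / (n : ℚ)) * ∑ d ∈ n.divisors with g.natDegree.Coprime d,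
        ((ArithmeticFunction.moebius d : ℤ) : ℚ) * ((Ubar g h (E (n / d))).ncard : ℚ) := by
  have hχ := dirichletCharacter_one_apply (R := ℚ) g.natDegree
  have hcount (m : ℕ) (hm : 0 < m) : ((Ubar g h (E m)).ncard : ℚ) =
      ∑ d ∈ m.divisors, (1 : DirichletCharacter ℚ g.natDegree) d *
        ((m / d : ℕ) * (IrredSet g h (m / d)).ncard : ℚ) := by
    have : FiniteDimensional F (E m) := .of_finrank_pos (hm.trans_eq (hE m hm).symm)
    have : Finite (E m) := Module.finite_of_finite F
    rw [ncard_Ubar hdeg hcop, hE m hm, Finset.sum_filter]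
    push_cast
    simp only [hχ, ite_mul, one_mul, zero_mul]
  have hinversion := sum_dirichletCharacter_mul_moebius_mul_eq 1
    (f := fun m => (m * (IrredSet g h m).ncard : ℚ)) hcount hn
  simp only [hχ, ite_mul, one_mul, zero_mul, ← Finset.sum_filter] at hinversion
  rw [hinversion]
  field_simp

/-- Möbius inversion formula: `|𝓘(g,h,n,q)| = (1/n) ∑_{d ∣ n, 3 ∤ d} μ(d) |Ū(n/d,q)|`,
where `E m` is a field with `q^m` elements extending `F_q`. -/
theorem stmt3 {F : Type*} [Field F] [Fintype F] (q : ℕ) (hq : Fintype.card F = q)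
    (g h : F[X]) (hg : g.Monic) (hgdeg : g.natDegree = 3) (hhdeg : h.natDegree ≤ 2)
    (hcop : IsCoprime g h)
    (E : ℕ → Type*) [∀ m, Field (E m)] [∀ m, Algebra F (E m)] [∀ m, Fintype (E m)]
    (hE : ∀ m, 0 < m → Fintype.card (E m) = q ^ m)
    (n : ℕ) (hn : 1 < n) :
    ((IrredSet g h n).ncard : ℚ) =
      (1 / (n : ℚ)) * ∑ d ∈ n.divisors.filter (fun d => ¬ 3 ∣ d),
        ((ArithmeticFunction.moebius d : ℤ) : ℚ) * ((Ubar g h (E (n / d))).ncard : ℚ) := by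
  have hfinrank (m : ℕ) (hm : 0 < m) : finrank F (E m) = m := by
    have hpow : q ^ finrank F (E m) = q ^ m := by
      rw [← hE m hm, ← hq, card_eq_pow_finrank (K := F) (V := E m)]
    exact Nat.pow_right_injective (hq ▸ Fintype.one_lt_card) hpow
  simpa only [hgdeg, Nat.prime_three.coprime_iff_not_dvd] using
    stmt3_general (by omega) hcop E hfinrank (zero_lt_one.trans hn)
end

section
/- Let F_q be a finite field of characteristic at least five, let τ be a nonzero element of F_q, and let n > 1 be an integer. Then |𝓘(x^3 − τx, 1, n, q)| = (1/(3 n_3)) (I(n/n_3, q^{n_3}) − I(n/n_3, ε)), where ε = 1 if q ≡ 1 (mod 3) and ε = −1 if q ≡ −1 (mod 3). -/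
open Polynomial

/-- `I(n,q) = (1/n) ∑_{d ∣ n} μ(d) q^{n/d}`, used formally for any rational `q`. -/
noncomputable def Ifun (n : ℕ) (q : ℚ) : ℚ :=
  (1 / (n : ℚ)) * ∑ d ∈ n.divisors, ((ArithmeticFunction.moebius d : ℤ) : ℚ) * q ^ (n / d)

/-- `I(n/m, q)` with the convention that it is `0` when `m` does not divide `n`
(i.e. when `n/m` is not a positive integer). -/
noncomputable def IfunD (n m : ℕ) (q : ℚ) : ℚ := if m ∣ n then Ifun (n / m) q else 0

/-- `n₃`: the largest power of `3` dividing `n`. -/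
def nThree (n : ℕ) : ℕ := 3 ^ (n.factorization 3)

/-!
The map `x ↦ x ^ 3 - τ * x` on a finite field `K` with `Q` elements, `3 ∤ Q`, misses exactly
`(Q - ε) / 3` values, where `Q ≡ ε = ±1` modulo `3`: two roots `x`, `y` of the same
`X ^ 3 - τ * X - α` satisfy `x ^ 2 + x * y + y ^ 2 = τ`, a conic with `Q - ε` points because its
left-hand side is a norm form of discriminant `-3`, and its points over each attained `α` number
three times the solutions of `x ^ 3 - τ * x = α`, less three.

On the other hand, as the cubic has degree at most three, an element `α` of the extension of degree
`n` of `F` with minimal polynomial `f` of degree `d` is missed if and only if `f (X ^ 3 - τ * X)` is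
irreducible and `3 * d ∤ n`. Counting missed values both ways gives
`∑ d * |𝓘 d| = (q ^ n - ε ^ n) / 3` over the `d ∣ n` divisible by the full power of `3` in `n`,
and Möbius inversion over the part of `n` prime to `3` isolates `|𝓘 n|`.
-/

open Finset

section QuadraticNorm

variable {K : Type*} [Field K] {a b : K}

instance [Fintype K] : Fintype (QuadraticAlgebra K a b) :=
  .ofEquiv _ (QuadraticAlgebra.equivProd a b).symm

theorem exists_quadraticNorm_eq [Finite K] (hab : b ^ 2 + 4 * a ≠ 0) (τ : K) :
    ∃ z : QuadraticAlgebra K a b, z.norm = τ := by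
  have := Fintype.ofFinite K
  by_cases h2 : ringChar K = 2
  · obtain ⟨x, rfl⟩ := FiniteField.isSquare_of_char_two h2 τ
    exact ⟨⟨x, 0⟩, by simp [QuadraticAlgebra.norm_def]⟩
  have two_ne_zero : (2 : K) ≠ 0 := Ring.two_ne_zero h2
  -- Complete the square: `4 * norm ⟨x, y⟩ = (2 * x + b * y) ^ 2 - (b ^ 2 + 4 * a) * y ^ 2`.
  obtain ⟨s, y, hsy⟩ := FiniteField.exists_root_sum_quadratic
    (f := X ^ 2 - C (4 * τ)) (g := C (-(b ^ 2 + 4 * a)) * X ^ 2)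
    (degree_X_pow_sub_C two_pos _) (degree_C_mul_X_pow 2 (neg_ne_zero.mpr hab))
    (FiniteField.odd_card_of_char_ne_two h2)
  simp only [eval_sub, eval_mul, eval_pow, eval_X, eval_C] at hsy
  refine ⟨⟨(s - b * y) / 2, y⟩, ?_⟩
  rw [QuadraticAlgebra.norm_def]
  field_simp
  linear_combination hsy

theorem im_ne_zero_of_quadraticNorm_eq_zero {z : QuadraticAlgebra K a b} (hz : z.norm = 0)
    (hz0 : z ≠ 0) : z.im ≠ 0 := by
  intro him
  have hre : z.re = 0 := by simpa [QuadraticAlgebra.norm_def, him] using hz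
  exact hz0 (QuadraticAlgebra.ext hre him)

variable [Fintype K] [DecidableEq K]

theorem card_quadraticNorm_eq_card_norm_one (hab : b ^ 2 + 4 * a ≠ 0) {τ : K} (hτ : τ ≠ 0) :
    #{z : QuadraticAlgebra K a b | z.norm = τ} = #{z : QuadraticAlgebra K a b | z.norm = 1} := by
  obtain ⟨w, rfl⟩ := exists_quadraticNorm_eq hab τ
  obtain ⟨u, rfl⟩ := QuadraticAlgebra.isUnit_iff_norm_isUnit.mpr hτ.isUnit
  refine (card_equiv u.mulLeft fun z ↦ ?_).symm
  rw [mem_filter_univ, mem_filter_univ, Units.mulLeft_apply, map_mul, mul_eq_left₀ hτ]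

variable (a b) in
theorem card_quadraticNorm_eq_zero :
    #{z : QuadraticAlgebra K a b | z.norm = 0} =
      #{m : K | m ^ 2 + b * m - a = 0} * (Fintype.card K - 1) + 1 := by
  classical
  have hzero : (0 : QuadraticAlgebra K a b) ∈ ({z | z.norm = 0} : Finset _) := by simp
  rw [← card_erase_add_one hzero, ← card_univ, ← card_erase_of_mem (mem_univ (0 : K)),
    ← card_product, add_left_inj]
  -- A nonzero `z` of norm zero is determined by its slope `z.re / z.im` and by `z.im`.
  refine card_nbij' (fun z ↦ (z.re / z.im, z.im)) (fun p ↦ ⟨p.1 * p.2, p.2⟩) ?_ ?_ ?_ ?_ <;>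
    simp only [Set.MapsTo, Set.LeftInvOn, Set.RightInvOn, mem_coe, mem_erase, mem_filter_univ,
      mem_product, mem_univ, and_true]
  · rintro z ⟨hz0, hz⟩
    have him := im_ne_zero_of_quadraticNorm_eq_zero hz hz0
    refine ⟨?_, him⟩
    rw [QuadraticAlgebra.norm_def] at hz
    field_simp
    linear_combination hz
  · rintro ⟨m, y⟩ ⟨hm, hy⟩
    refine ⟨fun h ↦ hy (congrArg QuadraticAlgebra.im h), ?_⟩
    rw [QuadraticAlgebra.norm_def]
    linear_combination y ^ 2 * hm
  · rintro z ⟨hz0, hz⟩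
    exact QuadraticAlgebra.ext
      (div_mul_cancel₀ _ (im_ne_zero_of_quadraticNorm_eq_zero hz hz0)) rfl
  · rintro ⟨m, y⟩ ⟨-, hy⟩
    exact Prod.ext (mul_div_cancel_right₀ m hy) rfl

theorem card_quadraticNorm_add_card_root (hab : b ^ 2 + 4 * a ≠ 0) {τ : K} (hτ : τ ≠ 0) :
    #{z : QuadraticAlgebra K a b | z.norm = τ} + #{m : K | m ^ 2 + b * m - a = 0} =
      Fintype.card K + 1 := by
  have hsum := card_eq_sum_card_fiberwise (s := univ) (t := univ)
    (f := (QuadraticAlgebra.norm : QuadraticAlgebra K a b → K)) fun z _ ↦ mem_univ z.norm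
  have hfiber (σ : K) (hσ : σ ∈ univ.erase 0) :
      #{z : QuadraticAlgebra K a b | z.norm = σ} = #{z : QuadraticAlgebra K a b | z.norm = τ} := by
    rw [card_quadraticNorm_eq_card_norm_one hab (ne_of_mem_erase hσ),
      card_quadraticNorm_eq_card_norm_one hab hτ]
  rw [← add_sum_erase _ _ (mem_univ 0), sum_congr rfl hfiber, sum_const,
    card_quadraticNorm_eq_zero, card_erase_of_mem (mem_univ 0), card_univ, card_univ, smul_eq_mul,
    Fintype.card_congr (QuadraticAlgebra.equivProd a b), Fintype.card_prod] at hsum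
  obtain ⟨k, hk⟩ := Nat.exists_eq_add_of_lt (Fintype.one_lt_card (α := K))
  rw [hk] at hsum ⊢
  simp only [add_tsub_cancel_right] at hsum
  apply Nat.eq_of_mul_eq_mul_left (show 0 < k + 1 by lia)
  grind

end QuadraticNorm

section ThirdRootsOfUnity

variable {K : Type*} [Field K] [Fintype K] {ε : ℤˣ}

theorem primitiveRoots_nonempty_iff_dvd_card_sub_one (p : ℕ) [hp : Fact p.Prime] :
    (primitiveRoots p K).Nonempty ↔ p ∣ Fintype.card K - 1 := by
  classical
  rw [← Fintype.card_units]
  constructor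
  · rintro ⟨ζ, hζ⟩
    have hζ := isPrimitiveRoot_of_mem_primitiveRoots hζ
    obtain ⟨u, rfl⟩ := hζ.isUnit hp.out.ne_zero
    exact (IsPrimitiveRoot.coe_units_iff.mp hζ).eq_orderOf ▸ orderOf_dvd_card
  · intro h
    obtain ⟨u, hu⟩ := exists_prime_orderOf_dvd_card p h
    exact ⟨u, (mem_primitiveRoots hp.out.pos).mpr
      (IsPrimitiveRoot.coe_units_iff.mpr (hu ▸ IsPrimitiveRoot.orderOf u))⟩

theorem three_ne_zero_of_card_modEq (hε : (Fintype.card K : ℤ) ≡ ε [ZMOD 3]) : (3 : K) ≠ 0 := by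
  intro h3
  obtain ⟨t, ht⟩ := hε.dvd
  have hε0 : ((ε : ℤ) : K) = 0 := by simpa [h3] using congrArg (Int.cast : ℤ → K) ht
  exact ((Units.isUnit ε).map (Int.castRingHom K)).ne_zero hε0

theorem card_primitiveRoots_three (hε : (Fintype.card K : ℤ) ≡ ε [ZMOD 3]) :
    (#(primitiveRoots 3 K) : ℤ) = 1 + ε := by
  have hdvd := primitiveRoots_nonempty_iff_dvd_card_sub_one (K := K) 3
  have hmod : (Fintype.card K : ℤ) % 3 = ε % 3 := hε
  rcases Int.units_eq_one_or ε with rfl | rfl <;> push_cast at hmod ⊢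
  · obtain ⟨ζ, hζ⟩ := hdvd.mpr (by lia)
    rw [(isPrimitiveRoot_of_mem_primitiveRoots hζ).card_primitiveRoots,
      Nat.totient_prime Nat.prime_three]
    rfl
  · rw [not_nonempty_iff_eq_empty.mp (mt hdvd.mp (by lia)), card_empty]
    rfl

end ThirdRootsOfUnity

section Cubic

theorem card_offDiag_pairs_add_three {ι : Type*} [DecidableEq ι] {a b c : ι}
    (h : ¬ (a = b ∧ b = c)) :
    #{(a, b), (a, c), (b, a), (b, c), (c, a), (c, b)} + 3 = 3 * #{a, b, c} := by
  by_cases hab : a = b <;> by_cases hbc : b = c <;> by_cases hac : a = c <;> grind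

theorem conic_iff_of_add_eq_zero {K : Type*} [Field K] {τ a b c : K} (hc : a + b + c = 0)
    (hτ : a ^ 2 + a * b + b ^ 2 = τ) {y : K} : a ^ 2 + a * y + y ^ 2 = τ ↔ y = b ∨ y = c := by
  obtain rfl : c = -a - b := by linear_combination hc
  have hfactor : a ^ 2 + a * y + y ^ 2 - τ = (y - b) * (y - (-a - b)) := by
    rw [← hτ]
    ring
  rw [← sub_eq_zero, hfactor, mul_eq_zero, sub_eq_zero, sub_eq_zero]

variable {K : Type*} [Field K] [Fintype K] [DecidableEq K] {ε : ℤˣ} {τ : K}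

theorem card_conic (hε : (Fintype.card K : ℤ) ≡ ε [ZMOD 3]) (hτ : τ ≠ 0) :
    (#{p : K × K | p.1 ^ 2 + p.1 * p.2 + p.2 ^ 2 = τ} : ℤ) = Fintype.card K - ε := by
  have h3 := three_ne_zero_of_card_modEq hε
  have : NeZero ((3 : ℕ) : K) := ⟨h3⟩
  have hnorm : #{p : K × K | p.1 ^ 2 + p.1 * p.2 + p.2 ^ 2 = τ} =
      #{z : QuadraticAlgebra K (-1) 1 | z.norm = τ} :=
    card_equiv (QuadraticAlgebra.equivProd (-1) 1).symm fun p ↦ by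
      simp [QuadraticAlgebra.norm_def, sq]
  have hroots : ({m | m ^ 2 + 1 * m - -1 = 0} : Finset K) = primitiveRoots 3 K := by
    ext m
    rw [mem_primitiveRoots three_pos, ← isRoot_cyclotomic_iff, cyclotomic_three]
    simp
  have hdisc : (1 : K) ^ 2 + 4 * -1 ≠ 0 := by
    convert neg_ne_zero.mpr h3 using 1
    ring
  have hcard := card_quadraticNorm_add_card_root hdisc hτ
  rw [hroots, ← hnorm] at hcard
  linarith [card_primitiveRoots_three hε]

theorem filter_cubic_eq {a b c : K} (hc : a + b + c = 0) (hτ : a ^ 2 + a * b + b ^ 2 = τ) :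
    ({x | x ^ 3 - τ * x = a ^ 3 - τ * a} : Finset K) = {a, b, c} := by
  obtain rfl : c = -a - b := by linear_combination hc
  ext x
  have hfactor : x ^ 3 - τ * x - (a ^ 3 - τ * a) = (x - a) * ((x - b) * (x - (-a - b))) := by
    rw [← hτ]
    ring
  rw [mem_filter_univ, ← sub_eq_zero, hfactor]
  simp only [mul_eq_zero, sub_eq_zero, mem_insert, mem_singleton]

theorem filter_conic_cubic_eq {a b c : K} (hc : a + b + c = 0)
    (hτ : a ^ 2 + a * b + b ^ 2 = τ) :
    ({p | p.1 ^ 2 + p.1 * p.2 + p.2 ^ 2 = τ ∧ p.1 ^ 3 - τ * p.1 = a ^ 3 - τ * a} :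
      Finset (K × K)) = {(a, b), (a, c), (b, a), (b, c), (c, a), (c, b)} := by
  have conic_a {y : K} := conic_iff_of_add_eq_zero hc hτ (y := y)
  have conic_b {y : K} : b ^ 2 + b * y + y ^ 2 = τ ↔ y = a ∨ y = c :=
    conic_iff_of_add_eq_zero (by linear_combination hc) (by linear_combination hτ)
  have conic_c {y : K} : c ^ 2 + c * y + y ^ 2 = τ ↔ y = a ∨ y = b :=
    conic_iff_of_add_eq_zero (by linear_combination hc)
      (by linear_combination hτ + (c - b) * hc)
  ext ⟨x, y⟩
  have hx : x ^ 3 - τ * x = a ^ 3 - τ * a ↔ x = a ∨ x = b ∨ x = c := by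
    rw [← mem_filter_univ (p := fun x ↦ x ^ 3 - τ * x = a ^ 3 - τ * a), filter_cubic_eq hc hτ,
      mem_insert, mem_insert, mem_singleton]
  simp only [mem_filter_univ, mem_insert, mem_singleton, Prod.mk.injEq, hx]
  grind

-- If `a, b, c` are the roots of `x ^ 3 - τ * x = α`, then `a + b + c = 0` and any two of them
-- form a point of the conic.
theorem card_conic_cubic_add_three (h3 : (3 : K) ≠ 0) (hτ : τ ≠ 0) (a : K) :
    #{p : K × K | p.1 ^ 2 + p.1 * p.2 + p.2 ^ 2 = τ ∧ p.1 ^ 3 - τ * p.1 = a ^ 3 - τ * a} + 3 =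
      3 * #{x : K | x ^ 3 - τ * x = a ^ 3 - τ * a} := by
  by_cases hb : ∃ b, a ^ 2 + a * b + b ^ 2 = τ
  · obtain ⟨b, hb⟩ := hb
    have hc : a + b + (-a - b) = 0 := by ring
    rw [filter_conic_cubic_eq hc hb, filter_cubic_eq hc hb]
    refine card_offDiag_pairs_add_three fun ⟨hab, hbc⟩ ↦ hτ ?_
    have ha : 3 * a = 0 := by linear_combination hbc + 2 * hab
    rw [← hb, ← hab, (mul_eq_zero_iff_left h3).mp ha]
    ring
  · have hroot {x : K} (hx : x ^ 3 - τ * x = a ^ 3 - τ * a) : x = a := by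
      by_contra hxa
      refine hb ⟨x, mul_left_cancel₀ (sub_ne_zero.mpr hxa) ?_⟩
      linear_combination hx
    have hconic : ({p | p.1 ^ 2 + p.1 * p.2 + p.2 ^ 2 = τ ∧
        p.1 ^ 3 - τ * p.1 = a ^ 3 - τ * a} : Finset (K × K)) = ∅ :=
      filter_eq_empty_iff.mpr fun p _ hp ↦ hb ⟨p.2, hroot hp.2 ▸ hp.1⟩
    have hcubic : ({x | x ^ 3 - τ * x = a ^ 3 - τ * a} : Finset K) = {a} := by
      ext x
      rw [mem_filter_univ, mem_singleton]
      exact ⟨hroot, fun h ↦ by rw [h]⟩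
    rw [hconic, hcubic, card_empty, card_singleton]

theorem card_conic_add_three_mul_card_image (h3 : (3 : K) ≠ 0) (hτ : τ ≠ 0) :
    #{p : K × K | p.1 ^ 2 + p.1 * p.2 + p.2 ^ 2 = τ} + 3 * #(univ.image fun x ↦ x ^ 3 - τ * x) =
      3 * Fintype.card K := by
  have hconic := card_eq_sum_card_fiberwise (f := fun p : K × K ↦ p.1 ^ 3 - τ * p.1)
    (s := {p : K × K | p.1 ^ 2 + p.1 * p.2 + p.2 ^ 2 = τ}) (t := univ.image fun x ↦ x ^ 3 - τ * x)
    fun p _ ↦ mem_image_of_mem _ (mem_univ p.1)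
  have hcubic := card_eq_sum_card_image (fun x ↦ x ^ 3 - τ * x) univ
  rw [hconic, ← card_univ, hcubic, mul_sum, mul_comm, ← smul_eq_mul, ← sum_const,
    ← sum_add_distrib]
  refine sum_congr rfl fun α hα ↦ ?_
  obtain ⟨a, -, rfl⟩ := mem_image.mp hα
  rw [filter_filter, card_conic_cubic_add_three h3 hτ]

theorem three_mul_card_compl_image_cubic (hε : (Fintype.card K : ℤ) ≡ ε [ZMOD 3]) (hτ : τ ≠ 0) :
    3 * (#(univ.image fun x ↦ x ^ 3 - τ * x)ᶜ : ℤ) = Fintype.card K - ε := by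
  have hsum := card_conic_add_three_mul_card_image (three_ne_zero_of_card_modEq hε) hτ
  have hcompl := card_add_card_compl (univ.image fun x ↦ x ^ 3 - τ * x)
  have hconic := card_conic hε hτ
  lia

end Cubic

section Composition

variable {F L : Type*} [Field F] [Field L] [Algebra F L]

theorem ratTransform_one (g f : F[X]) : ratTransform g 1 f = f.comp g := by
  simp [ratTransform, comp, eval₂_eq_sum_range]

variable [Finite L]

theorem exists_aeval_eq_of_minpoly_aeval_eq {M : Type*} [Field M] [Algebra F M] {g : F[X]} {α : L}
    {y : M} (hM : Module.finrank F M ∣ Module.finrank F L)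
    (hy : minpoly F (aeval y g) = minpoly F α) : ∃ x : L, aeval x g = α := by
  obtain ⟨φ⟩ := FiniteField.nonempty_algHom_of_finrank_dvd hM
  obtain ⟨σ, hσ⟩ := minpoly.exists_algEquiv_of_root (K := F) (x := φ (aeval y g))
    (Algebra.IsAlgebraic.isAlgebraic α) (by rw [← hy, aeval_algHom_apply, minpoly.aeval, map_zero])
  exact ⟨σ (φ y), by rw [aeval_algHom_apply, aeval_algHom_apply, hσ]⟩

theorem irreducible_minpoly_comp_of_forall_aeval_ne {g : F[X]} (hg : g.Monic)
    (hdeg : g.natDegree ∈ Icc 1 3) {α : L} (hα : ∀ x : L, aeval x g ≠ α) :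
    Irreducible ((minpoly F α).comp g) := by
  have hint : IsIntegral F α := Algebra.IsIntegral.isIntegral α
  refine irreducible_comp (minpoly.monic hint) hg (minpoly.irreducible hint) fun E _ _ x hx ↦ ?_
  have hx_int : IsIntegral F x := minpoly.ne_zero_iff.mp (hx ▸ minpoly.ne_zero hint)
  apply irreducible_of_degree_le_three_of_not_isRoot
  · rwa [natDegree_sub_C, natDegree_map]
  · intro y hy
    have hy : aeval y g = IntermediateField.AdjoinSimple.gen F x := by
      rwa [IsRoot, eval_sub, eval_C, eval_map_algebraMap, sub_eq_zero] at hy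
    obtain ⟨β, hβ⟩ := exists_aeval_eq_of_minpoly_aeval_eq (L := L) (α := α) (y := y)
      (by rw [IntermediateField.adjoin.finrank hx_int, hx]; exact minpoly.degree_dvd hint)
      (by rw [hy, IntermediateField.minpoly_gen, hx])
    exact hα β hβ

theorem forall_aeval_ne_iff {g : F[X]} (hg : g.Monic) (hdeg : g.natDegree ∈ Icc 1 3) {α : L} :
    (∀ x : L, aeval x g ≠ α) ↔ Irreducible ((minpoly F α).comp g) ∧
      ¬ g.natDegree * (minpoly F α).natDegree ∣ Module.finrank F L := by
  have hint : IsIntegral F α := Algebra.IsIntegral.isIntegral α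
  have hdeg0 : g.natDegree ≠ 0 := Nat.one_le_iff_ne_zero.mp (mem_Icc.mp hdeg).1
  have hmonic : ((minpoly F α).comp g).Monic := (minpoly.monic hint).comp hg hdeg0
  have hcomp : ((minpoly F α).comp g).natDegree = g.natDegree * (minpoly F α).natDegree := by
    rw [natDegree_comp, mul_comm]
  rw [← hcomp]
  constructor
  · intro hα
    have hirr := irreducible_minpoly_comp_of_forall_aeval_ne hg hdeg hα
    refine ⟨hirr, fun hdvd ↦ ?_⟩
    have := Fact.mk hirr
    let y := AdjoinRoot.root ((minpoly F α).comp g)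
    have hy : aeval (aeval y g) (minpoly F α) = 0 := by
      rw [← aeval_comp, AdjoinRoot.aeval_eq, AdjoinRoot.mk_self]
    obtain ⟨x, hx⟩ := exists_aeval_eq_of_minpoly_aeval_eq (L := L) (α := α) (y := y)
      (finrank_quotient_span_eq_natDegree.dvd.trans hdvd)
      (minpoly.eq_of_irreducible_of_monic (minpoly.irreducible hint) hy (minpoly.monic hint)).symm
    exact hα x hx
  · rintro ⟨hirr, hndvd⟩ x hx
    have hroot : aeval x ((minpoly F α).comp g) = 0 := by rw [aeval_comp, hx, minpoly.aeval]
    rw [minpoly.eq_of_irreducible_of_monic hirr hroot hmonic] at hndvd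
    exact hndvd (minpoly.degree_dvd (Algebra.IsIntegral.isIntegral x))

theorem natCard_minpoly_eq {f : F[X]} (hf : f.Monic) (hirr : Irreducible f)
    (hdvd : f.natDegree ∣ Module.finrank F L) :
    Nat.card {α : L // minpoly F α = f} = f.natDegree := by
  have := Fact.mk hirr
  have hfinrank : Module.finrank F (AdjoinRoot f) = f.natDegree :=
    finrank_quotient_span_eq_natDegree
  rw [← hfinrank, ← FiniteField.natCard_algHom_of_finrank_dvd (L := L) (hfinrank ▸ hdvd),
    Nat.card_congr (AdjoinRoot.equiv L F f hirr.ne_zero)]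
  refine Nat.card_congr (Equiv.subtypeEquivRight fun α ↦ ?_)
  rw [mem_aroots]
  constructor
  · rintro rfl
    exact ⟨hirr.ne_zero, minpoly.aeval F α⟩
  · exact fun h ↦ (minpoly.eq_of_irreducible_of_monic hirr h.2 hf).symm

theorem ncard_minpoly_mem {d : ℕ} {S : Set F[X]}
    (hS : ∀ f ∈ S, f.Monic ∧ Irreducible f ∧ f.natDegree = d) (hd : d ∣ Module.finrank F L) :
    {α : L | minpoly F α ∈ S}.ncard = d * S.ncard := by
  have hfiber (f : S) : Nonempty ({α : L // minpoly F α = f} ≃ Fin d) := by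
    obtain ⟨hf, hirr, rfl⟩ := hS f f.2
    exact ⟨Finite.equivFinOfCardEq (natCard_minpoly_eq hf hirr hd)⟩
  let e : {α : L | minpoly F α ∈ S} ≃ S × Fin d :=
    (Equiv.sigmaSubtypeFiberEquivSubtype (q := (· ∈ S)) (minpoly F)
      fun _ ↦ Iff.rfl).symm.trans (Equiv.sigmaEquivProdOfEquiv fun f ↦ (hfiber f).some)
  rw [← Nat.card_coe_set_eq, Nat.card_congr e, Nat.card_prod, Nat.card_fin, Nat.card_coe_set_eq,
    mul_comm]

theorem minpoly_mem_irredSet_iff {g : F[X]} (hg : g.Monic) (hdeg : g.natDegree ∈ Icc 1 3) {d : ℕ}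
    (hd : ¬ g.natDegree * d ∣ Module.finrank F L) {α : L} :
    minpoly F α ∈ IrredSet g 1 d ↔ (∀ x : L, aeval x g ≠ α) ∧ (minpoly F α).natDegree = d := by
  have hint : IsIntegral F α := Algebra.IsIntegral.isIntegral α
  simp only [IrredSet, Set.mem_ofPred_eq, ratTransform_one, minpoly.monic hint,
    minpoly.irreducible hint, true_and]
  rw [forall_aeval_ne_iff hg hdeg]
  constructor
  · rintro ⟨rfl, hirr⟩
    exact ⟨⟨hirr, hd⟩, rfl⟩
  · rintro ⟨⟨hirr, -⟩, rfl⟩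
    exact ⟨rfl, hirr⟩

theorem card_compl_image_aeval [Fintype L] [DecidableEq L] {g : F[X]} (hg : g.Monic)
    (hdeg : g.natDegree ∈ Icc 1 3) :
    #(univ.image fun x : L ↦ aeval x g)ᶜ =
      ∑ d ∈ (Module.finrank F L).divisors with ¬ g.natDegree * d ∣ Module.finrank F L,
        d * (IrredSet g 1 d).ncard := by
  have hmem {α : L} : α ∈ (univ.image fun x : L ↦ aeval x g)ᶜ ↔ ∀ x : L, aeval x g ≠ α := by
    simp
  rw [card_eq_sum_card_fiberwise (f := fun α ↦ (minpoly F α).natDegree)]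
  · refine sum_congr rfl fun d hd ↦ ?_
    obtain ⟨hdvd, hndvd⟩ := mem_filter.mp hd
    rw [← ncard_minpoly_mem (L := L) (fun f hf ↦ ⟨hf.1, hf.2.1, hf.2.2.1⟩)
      (Nat.dvd_of_mem_divisors hdvd), ← Set.ncard_coe_finset]
    congr 1
    ext α
    rw [mem_coe, mem_filter, hmem, Set.mem_ofPred_eq, minpoly_mem_irredSet_iff hg hdeg hndvd]
  · intro α hα
    rw [mem_coe, mem_filter, Nat.mem_divisors]
    exact ⟨⟨minpoly.degree_dvd (Algebra.IsIntegral.isIntegral α), Module.finrank_pos.ne'⟩,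
      ((forall_aeval_ne_iff hg hdeg).mp (hmem.mp hα)).2⟩

end Composition

section MoebiusInversion

theorem sum_divisors_filter_not_mul_dvd {M : Type*} [AddCommMonoid M] {p m : ℕ} (hp : p.Prime)
    (hm : ¬ p ∣ m) (k : ℕ) (f : ℕ → M) :
    ∑ d ∈ (p ^ k * m).divisors with ¬ p * d ∣ p ^ k * m, f d =
      ∑ e ∈ m.divisors, f (p ^ k * e) := by
  have hpk : p ^ k ≠ 0 := pow_ne_zero k hp.ne_zero
  have hm0 : m ≠ 0 := fun h ↦ hm (h ▸ dvd_zero p)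
  rw [← sum_image fun a _ b _ h ↦ Nat.eq_of_mul_eq_mul_left (Nat.pos_of_ne_zero hpk) h]
  refine sum_congr ?_ fun _ _ ↦ rfl
  ext d
  simp only [mem_image, mem_filter, Nat.mem_divisors, ne_eq, mul_eq_zero, hpk, hm0, or_self,
    not_false_eq_true, and_true]
  constructor
  · rintro ⟨⟨c, hc⟩, hd⟩
    have hpc : ¬ p ∣ c := fun h ↦ hd (hc ▸ mul_comm p d ▸ Nat.mul_dvd_mul_left d h)
    obtain ⟨e, rfl⟩ : p ^ k ∣ d :=
      (((Nat.Prime.coprime_iff_not_dvd hp).mpr hpc).pow_left k).dvd_of_dvd_mul_right ⟨m, hc.symm⟩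
    exact ⟨e, ⟨c, mul_left_cancel₀ hpk (hc.trans (mul_assoc ..))⟩, rfl⟩
  · rintro ⟨e, he, rfl⟩
    refine ⟨Nat.mul_dvd_mul_left _ he, fun h ↦ hm ?_⟩
    rw [mul_left_comm] at h
    exact (dvd_mul_right p e).trans (Nat.dvd_of_mul_dvd_mul_left (Nat.pos_of_ne_zero hpk) h)

theorem mul_Ifun (m : ℕ) (x : ℚ) :
    m * Ifun m x = ∑ d ∈ m.divisors, (ArithmeticFunction.moebius d : ℚ) * x ^ (m / d) := by
  rcases eq_or_ne m 0 with rfl | hm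
  · simp
  · rw [Ifun, ← mul_assoc, mul_one_div_cancel (Nat.cast_ne_zero.mpr hm), one_mul]

theorem eq_mul_Ifun_sub_Ifun_of_sum_divisors_eq {f : ℕ → ℚ} {m : ℕ} (hm : m ≠ 0) {x y : ℚ}
    (hf : ∀ e, e ∣ m → ∑ i ∈ e.divisors, f i = x ^ e - y ^ e) :
    f m = m * (Ifun m x - Ifun m y) := by
  rw [← (ArithmeticFunction.sum_eq_iff_sum_mul_moebius_eq_on {e | e ∣ m}
    fun _ _ ↦ Dvd.dvd.trans).mp (fun e _ he ↦ hf e he) m (Nat.pos_of_ne_zero hm) dvd_rfl,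
    Nat.sum_divisorsAntidiagonal
      fun d e ↦ ((ArithmeticFunction.moebius d : ℤ) : ℚ) * (x ^ e - y ^ e),
    mul_sub, mul_Ifun, mul_Ifun, ← sum_sub_distrib]
  exact sum_congr rfl fun _ _ ↦ mul_sub ..

end MoebiusInversion

section CubicComposition

variable {F : Type*} [Field F] [Fintype F] {ε : ℤˣ} {τ : F}

theorem three_mul_sum_ncard_irredSet (hε : (Fintype.card F : ℤ) ≡ ε [ZMOD 3]) (hτ : τ ≠ 0) {n : ℕ}
    (hn : n ≠ 0) :
    3 * (∑ d ∈ n.divisors with ¬ 3 * d ∣ n, d * (IrredSet (X ^ 3 - C τ * X) 1 d).ncard : ℤ) =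
      Fintype.card F ^ n - ε ^ n := by
  classical
  have : Fact (ringChar F).Prime := ⟨CharP.char_is_prime F _⟩
  have : NeZero n := ⟨hn⟩
  let L := FiniteField.Extension F (ringChar F) n
  have := Fintype.ofFinite L
  have hfinrank : Module.finrank F L = n := FiniteField.finrank_extension F (ringChar F) n
  have hcard : Fintype.card L = Fintype.card F ^ n := by
    rw [Fintype.card_eq_nat_card, FiniteField.natCard_extension, Fintype.card_eq_nat_card]
  have hdeg : (X ^ 3 - C τ * X).natDegree = 3 := by compute_degree!
  have hsum := card_compl_image_aeval (L := L) (g := X ^ 3 - C τ * X) (by monicity!)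
    (by rw [hdeg]; decide)
  have himage := three_mul_card_compl_image_cubic (K := L) (ε := ε ^ n)
    (τ := algebraMap F L τ) (by rw [hcard]; push_cast; exact hε.pow n)
    ((_root_.map_ne_zero _).mpr hτ)
  simp only [map_sub, map_mul, map_pow, aeval_X, aeval_C, hdeg, hfinrank] at hsum
  rw [hsum, hcard] at himage
  exact_mod_cast himage

theorem three_mul_three_pow_mul_ncard_irredSet (hε : (Fintype.card F : ℤ) ≡ ε [ZMOD 3])
    (hτ : τ ≠ 0) {m : ℕ} (hm : ¬ 3 ∣ m) (k : ℕ) :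
    3 * 3 ^ k * ((IrredSet (X ^ 3 - C τ * X) 1 (3 ^ k * m)).ncard : ℚ) =
      Ifun m ((Fintype.card F : ℚ) ^ 3 ^ k) - Ifun m (ε : ℤ) := by
  have hm0 : m ≠ 0 := fun h ↦ hm (h ▸ dvd_zero 3)
  have hεk : ε ^ 3 ^ k = ε := by
    rcases Int.units_eq_one_or ε with rfl | rfl
    · exact one_pow _
    · exact (Odd.pow (by decide)).neg_one_pow
  have hinv := eq_mul_Ifun_sub_Ifun_of_sum_divisors_eq hm0
    (f := fun e ↦ 3 * ((3 ^ k * e : ℕ) * (IrredSet (X ^ 3 - C τ * X) 1 (3 ^ k * e)).ncard))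
    (x := (Fintype.card F : ℚ) ^ 3 ^ k) (y := (ε : ℤ)) fun e he ↦ by
      have he3 : ¬ 3 ∣ e := fun h ↦ hm (h.trans he)
      have hsum := three_mul_sum_ncard_irredSet hε hτ (n := 3 ^ k * e)
        (mul_ne_zero (by positivity) (ne_zero_of_dvd_ne_zero hm0 he))
      rw [sum_divisors_filter_not_mul_dvd Nat.prime_three he3, pow_mul, pow_mul,
        ← Units.val_pow_eq_pow_val ε, hεk] at hsum
      rw [← mul_sum]
      exact_mod_cast hsum
  refine mul_left_cancel₀ (Nat.cast_ne_zero.mpr hm0 : (m : ℚ) ≠ 0) ?_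
  rw [← hinv]
  push_cast
  ring

end CubicComposition

theorem stmt10_general {F : Type*} [Field F] [Fintype F] (q : ℕ) (hq : Fintype.card F = q) (τ : F)
    (hτ : τ ≠ 0) (n : ℕ) (hn : n ≠ 0) :
    ∀ ε : ℚ, ((q % 3 = 1 ∧ ε = 1) ∨ (q % 3 = 2 ∧ ε = -1)) →
      ((IrredSet (X ^ 3 - C τ * X) 1 n).ncard : ℚ) =
        (1 / (3 * (nThree n : ℚ))) *
          (Ifun (n / nThree n) ((q : ℚ) ^ nThree n) - Ifun (n / nThree n) ε) := by
  intro ε hε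
  obtain ⟨ε, rfl, hqε⟩ : ∃ η : ℤˣ, ε = (η : ℤ) ∧ (q : ℤ) ≡ η [ZMOD 3] := by
    rcases hε with ⟨hmod, rfl⟩ | ⟨hmod, rfl⟩
    · exact ⟨1, by simp, show (q : ℤ) % 3 = 1 % 3 by lia⟩
    · exact ⟨-1, by simp, show (q : ℤ) % 3 = (-1) % 3 by lia⟩
  subst hq
  have hcount := three_mul_three_pow_mul_ncard_irredSet hqε hτ
    (Nat.not_dvd_ordCompl Nat.prime_three hn) (n.factorization 3)
  rw [Nat.ordProj_mul_ordCompl_eq_self] at hcount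
  rw [nThree, ← hcount]
  push_cast
  field_simp

/-- Theorem 10: counting monic irreducible `f` of degree `n > 1` over `F_q` (characteristic
at least five, `τ ≠ 0`) such that `f(x³ − τx)` is irreducible; `ε = (q/3)` is the Legendre
symbol, i.e. `ε = 1` if `q ≡ 1 (mod 3)` and `ε = −1` if `q ≡ −1 (mod 3)`. -/
theorem stmt10 {F : Type*} [Field F] [Fintype F] (q : ℕ) (hq : Fintype.card F = q)
    (hchar : 5 ≤ ringChar F) (τ : F) (hτ : τ ≠ 0)
    (n : ℕ) (hn : 1 < n) :
    ∀ ε : ℚ, ((q % 3 = 1 ∧ ε = 1) ∨ (q % 3 = 2 ∧ ε = -1)) →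
      ((IrredSet (X ^ 3 - C τ * X) 1 n).ncard : ℚ) =
        (1 / (3 * (nThree n : ℚ))) *
          (Ifun (n / nThree n) ((q : ℚ) ^ nThree n) - Ifun (n / nThree n) ε) :=
  stmt10_general q hq τ hτ n (by lia)
end
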